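/- arXiv:2110.12954 — 6 statements merged into one kernel-verified Lean document; each statement's English description precedes it below -/
import Mathlib

section
/- Let P be a three-criteria Pareto set of S. If two journeys J and J' in P have the same arrival time and the same number of used trips (i.e., the first two components of c J and c J' coincide), then J = J'. In particular, for a fixed arrival time and a fixed number of trips, the Pareto set contains at most one journey. -/
/-- A three-criteria Pareto set of `S`: a subset `P ⊆ S` of minimum cardinality such that
every journey in `S` is weakly dominated (componentwise `≤` on all three criteria)
by some journey in `P`. -/
def IsParetoSet {J : Type*} (S : Finset J) (c : J → ℕ × ℕ × ℕ) (P : Finset J) : Prop :=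
  P ⊆ S ∧ (∀ j ∈ S, ∃ p ∈ P, c p ≤ c j) ∧
    ∀ Q : Finset J, Q ⊆ S → (∀ j ∈ S, ∃ q ∈ Q, c q ≤ c j) → P.card ≤ Q.card

theorem pareto_aux {J : Type*} (S : Finset J)
    (c : J → ℕ × ℕ × ℕ) (P : Finset J) (hP : IsParetoSet S c P)
    (a b : J) (ha : a ∈ P) (hb : b ∈ P) (hab : c a ≤ c b) : a = b := by
  classical
  obtain ⟨h1, h2, h3⟩ := hP
  by_contra hne
  have h := h3 (P.erase b) ((Finset.erase_subset _ _).trans h1) (by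
    intro x hx
    obtain ⟨p, hp, hpx⟩ := h2 x hx
    by_cases hpb : p = b
    · subst hpb
      exact ⟨a, Finset.mem_erase.2 ⟨hne, ha⟩, hab.trans hpx⟩
    · exact ⟨p, Finset.mem_erase.2 ⟨hpb, hp⟩, hpx⟩)
  exact absurd (Finset.card_erase_lt_of_mem hb) (not_lt.2 h)

/-- If two journeys of a three-criteria Pareto set have the same arrival time and the
same number of used trips, they are equal. -/
theorem pareto_unique_of_arrival_trips_eq {J : Type*} (S : Finset J) (hS : S.Nonempty)
    (c : J → ℕ × ℕ × ℕ) (P : Finset J) (hP : IsParetoSet S c P)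
    (j j' : J) (hj : j ∈ P) (hj' : j' ∈ P)
    (harr : (c j).1 = (c j').1) (htrips : (c j).2.1 = (c j').2.1) :
    j = j' := by
  rcases le_total (c j).2.2 (c j').2.2 with h | h
  · exact pareto_aux S c P hP j j' hj hj' ⟨harr.le, htrips.le, h⟩
  · exact (pareto_aux S c P hP j' j hj' hj ⟨harr.ge, htrips.ge, h⟩).symm
end

section
/- Let P be a three-criteria Pareto set of S. Then the image c '' P is exactly the set of minimal criteria vectors of S, i.e., c '' P = { v ∈ c '' S | ∀ w ∈ c '' S, (w ≤ v componentwise) → w = v }. -/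
/-- The image under `c` of a three-criteria Pareto set is exactly the set of
minimal criteria vectors of `S`. -/
theorem pareto_image_eq_minimals {J : Type*} (S : Finset J) (hS : S.Nonempty)
    (c : J → ℕ × ℕ × ℕ) (P : Finset J) (hP : IsParetoSet S c P) :
    c '' (P : Set J) =
      {v ∈ c '' (S : Set J) | ∀ w ∈ c '' (S : Set J), w ≤ v → w = v} := by
  classical
  obtain ⟨hsub, hdom, hmin⟩ := hP
  ext v
  constructor
  · rintro ⟨p, hp, rfl⟩
    have hp : p ∈ P := hp
    refine ⟨⟨p, hsub hp, rfl⟩, ?_⟩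
    rintro _ ⟨s, hs, rfl⟩ hle
    obtain ⟨q, hq, hqs⟩ := hdom s hs
    by_cases hqp : q = p
    · subst hqp
      exact le_antisymm hle hqs
    · exfalso
      have h := hmin (P.erase p) ((Finset.erase_subset _ _).trans hsub) (by
        intro j hj
        obtain ⟨r, hr, hrj⟩ := hdom j hj
        by_cases hrp : r = p
        · subst hrp
          exact ⟨q, Finset.mem_erase.2 ⟨hqp, hq⟩, (hqs.trans hle).trans hrj⟩
        · exact ⟨r, Finset.mem_erase.2 ⟨hrp, hr⟩, hrj⟩)
      exact absurd (Finset.card_erase_lt_of_mem hp) (not_lt.2 h)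
  · rintro ⟨⟨s, hs, rfl⟩, hm⟩
    obtain ⟨p, hp, hps⟩ := hdom s hs
    exact ⟨p, hp, hm _ ⟨p, hsub hp, rfl⟩ hps⟩
end

section
/- Let P be a three-criteria Pareto set of S. Then c is injective on P, and the cardinality of P equals the number of minimal criteria vectors of S, i.e., |P| = |{ v ∈ c '' S | ∀ w ∈ c '' S, (w ≤ v componentwise) → w = v }|. In particular, all three-criteria Pareto sets of S have the same cardinality and the same image under c. -/
theorem pareto_anti {J : Type*} (S : Finset J)
    (c : J → ℕ × ℕ × ℕ) (P : Finset J) (hP : IsParetoSet S c P) :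
    ∀ p ∈ P, ∀ q ∈ P, c p ≤ c q → p = q := by
  classical
  obtain ⟨h1, h2, h3⟩ := hP
  intro p hp q hq hpq
  by_contra hne
  have h := h3 (P.erase q) ((Finset.erase_subset _ _).trans h1) (by
    intro j hj
    obtain ⟨r, hr, hrj⟩ := h2 j hj
    by_cases hrq : r = q
    · subst hrq
      exact ⟨p, Finset.mem_erase.2 ⟨hne, hp⟩, hpq.trans hrj⟩
    · exact ⟨r, Finset.mem_erase.2 ⟨hrq, hr⟩, hrj⟩)
  have := Finset.card_erase_lt_of_mem hq
  omega

theorem pareto_image {J : Type*} (S : Finset J)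
    (c : J → ℕ × ℕ × ℕ) (P : Finset J) (hP : IsParetoSet S c P) :
    c '' (P : Set J) = {v ∈ c '' (S : Set J) | ∀ w ∈ c '' (S : Set J), w ≤ v → w = v} := by
  have ha := pareto_anti S c P hP
  obtain ⟨h1, h2, -⟩ := hP
  ext v
  constructor
  · rintro ⟨p, hp, rfl⟩
    refine ⟨⟨p, h1 hp, rfl⟩, ?_⟩
    rintro _ ⟨s, hs, rfl⟩ hle
    obtain ⟨q, hq, hqs⟩ := h2 s hs
    have := ha q hq p hp (hqs.trans hle)
    subst this
    exact le_antisymm hle hqs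
  · rintro ⟨⟨s, hs, rfl⟩, hm⟩
    obtain ⟨q, hq, hqs⟩ := h2 s hs
    exact ⟨q, hq, hm _ ⟨q, h1 hq, rfl⟩ hqs⟩

theorem pareto_inj {J : Type*} (S : Finset J)
    (c : J → ℕ × ℕ × ℕ) (P : Finset J) (hP : IsParetoSet S c P) :
    Set.InjOn c (P : Set J) :=
  fun p hp q hq h => pareto_anti S c P hP p hp q hq h.le

theorem pareto_card {J : Type*} (S : Finset J)
    (c : J → ℕ × ℕ × ℕ) (P : Finset J) (hP : IsParetoSet S c P) :
    P.card = {v ∈ c '' (S : Set J) | ∀ w ∈ c '' (S : Set J), w ≤ v → w = v}.ncard := by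
  rw [← pareto_image S c P hP, Set.ncard_image_of_injOn (pareto_inj S c P hP),
    Set.ncard_coe_finset]

/-- On a three-criteria Pareto set `P`, the criteria map `c` is injective, and `|P|`
equals the number of minimal criteria vectors of `S`. In particular, any two
three-criteria Pareto sets of `S` have the same cardinality and the same image
under `c`. -/
theorem pareto_injOn_card {J : Type*} (S : Finset J) (hS : S.Nonempty)
    (c : J → ℕ × ℕ × ℕ) (P : Finset J) (hP : IsParetoSet S c P) :
    Set.InjOn c (P : Set J) ∧
    P.card = {v ∈ c '' (S : Set J) | ∀ w ∈ c '' (S : Set J), w ≤ v → w = v}.ncard ∧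
    ∀ P' : Finset J, IsParetoSet S c P' →
      P.card = P'.card ∧ c '' (P : Set J) = c '' (P' : Set J) := by
  exact ⟨pareto_inj S c P hP, pareto_card S c P hP, fun P' hP' =>
    ⟨(pareto_card S c P hP).trans (pareto_card S c P' hP').symm,
      (pareto_image S c P hP).trans (pareto_image S c P' hP').symm⟩⟩
end

section
/- Let P be a three-criteria Pareto set of S and A an anchor Pareto set of S. Then for every anchor journey a ∈ A there exists a journey J ∈ P with the same arrival time and the same number of trips as a, i.e., π(J) = π(a). -/
/-- An anchor Pareto set of `S`: a subset `A ⊆ S` of minimum cardinality such that every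
journey in `S` is weakly dominated in the two criteria arrival time (first component)
and number of trips (second component) by some journey in `A`. -/
def IsAnchorParetoSet {J : Type*} (S : Finset J) (c : J → ℕ × ℕ × ℕ) (A : Finset J) : Prop :=
  A ⊆ S ∧ (∀ j ∈ S, ∃ a ∈ A, (c a).1 ≤ (c j).1 ∧ (c a).2.1 ≤ (c j).2.1) ∧
    ∀ Q : Finset J, Q ⊆ S →
      (∀ j ∈ S, ∃ q ∈ Q, (c q).1 ≤ (c j).1 ∧ (c q).2.1 ≤ (c j).2.1) → A.card ≤ Q.card

/-- For every anchor journey `a ∈ A` there is a journey in the three-criteria Pareto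
set `P` with the same arrival time and the same number of trips as `a`. -/
theorem pareto_contains_anchor_projection {J : Type*} (S : Finset J) (hS : S.Nonempty)
    (c : J → ℕ × ℕ × ℕ) (P A : Finset J)
    (hP : IsParetoSet S c P) (hA : IsAnchorParetoSet S c A) :
    ∀ a ∈ A, ∃ j ∈ P, (c j).1 = (c a).1 ∧ (c j).2.1 = (c a).2.1 := by
  classical
  intro a ha
  obtain ⟨hPS, hPd, -⟩ := hP
  obtain ⟨hAS, hAd, hAm⟩ := hA
  obtain ⟨p, hp, hpa⟩ := hPd a (hAS ha)
  have h1 : (c p).1 ≤ (c a).1 := hpa.1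
  have h2 : (c p).2.1 ≤ (c a).2.1 := hpa.2.1
  obtain ⟨b, hb, hb1, hb2⟩ := hAd p (hPS hp)
  by_cases hba : b = a
  · subst hba
    exact ⟨p, hp, le_antisymm h1 hb1, le_antisymm h2 hb2⟩
  · exfalso
    have h := hAm (A.erase a) ((Finset.erase_subset _ _).trans hAS) (by
      intro j hj
      obtain ⟨q, hq, hq1, hq2⟩ := hAd j hj
      by_cases hqa : q = a
      · subst hqa
        exact ⟨b, Finset.mem_erase.2 ⟨hba, hb⟩, by omega, by omega⟩
      · exact ⟨q, Finset.mem_erase.2 ⟨hqa, hq⟩, hq1, hq2⟩)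
    exact absurd (Finset.card_erase_lt_of_mem ha) (not_lt.2 h)
end

section
/- Let P be a three-criteria Pareto set of S, A an anchor Pareto set of S, τ ∈ ℕ a departure time with arrival time of J ≥ τ for every J ∈ S, and let λ, κ ∈ ℝ with λ ≥ 1 and κ ≥ 1 be the arrival slack and trip slack. For J ∈ P let α(J) ∈ A denote its anchor journey, i.e., the unique element of A with maximum number of trips among those with at most as many trips as J. Define the restricted Pareto set P_R := { J ∈ P | (trips of J : ℝ) ≤ (trips of α(J)) · κ and (arrival of J − τ : ℝ) ≤ (arrival of α(J) − τ) · λ }. Then for every a ∈ A there exists J ∈ P_R with the same arrival time and the same number of trips as a. In particular, P_R is nonempty. -/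
theorem anchor_antichain {J : Type*} {S : Finset J} {c : J → ℕ × ℕ × ℕ} {A : Finset J}
    (hA : IsAnchorParetoSet S c A) {a b : J} (ha : a ∈ A) (hb : b ∈ A)
    (h1 : (c b).1 ≤ (c a).1) (h2 : (c b).2.1 ≤ (c a).2.1) : b = a := by
  classical
  by_contra hne
  obtain ⟨hs, hd, hm⟩ := hA
  have h := hm (A.erase a) ((Finset.erase_subset _ _).trans hs) (by
    intro j hj
    obtain ⟨x, hx, hx1, hx2⟩ := hd j hj
    by_cases hxa : x = a
    · subst hxa
      exact ⟨b, Finset.mem_erase.2 ⟨hne, hb⟩, h1.trans hx1, h2.trans hx2⟩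
    · exact ⟨x, Finset.mem_erase.2 ⟨hxa, hx⟩, hx1, hx2⟩)
  have := Finset.card_erase_lt_of_mem ha
  omega

/-- The restricted Pareto set contains, for each anchor journey, a journey with the same
arrival time and number of trips; in particular, it is nonempty.

Here `τ` is the departure time (no journey of `S` arrives before `τ`), `λ` (`lam`) is the
arrival slack, `κ` (`kap`) is the trip slack, and `α j` (`anchor j`) denotes the anchor
journey of `j`, i.e., the unique element of `A` with maximum number of trips among those
with at most as many trips as `j`. -/
theorem restricted_pareto_contains_anchors {J : Type*} (S : Finset J) (hS : S.Nonempty)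
    (c : J → ℕ × ℕ × ℕ) (P A : Finset J)
    (hP : IsParetoSet S c P) (hA : IsAnchorParetoSet S c A)
    (τ : ℕ) (hτ : ∀ j ∈ S, τ ≤ (c j).1)
    (lam kap : ℝ) (hlam : 1 ≤ lam) (hkap : 1 ≤ kap)
    (anchor : J → J)
    (hanchor : ∀ j ∈ S, anchor j ∈ A ∧ (c (anchor j)).2.1 ≤ (c j).2.1 ∧
      ∀ a ∈ A, (c a).2.1 ≤ (c j).2.1 → (c a).2.1 ≤ (c (anchor j)).2.1) :
    (∀ a ∈ A, ∃ j ∈ {j ∈ (P : Set J) |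
        ((c j).2.1 : ℝ) ≤ ((c (anchor j)).2.1 : ℝ) * kap ∧
        ((c j).1 : ℝ) - (τ : ℝ) ≤ (((c (anchor j)).1 : ℝ) - (τ : ℝ)) * lam},
      (c j).1 = (c a).1 ∧ (c j).2.1 = (c a).2.1) ∧
    {j ∈ (P : Set J) |
        ((c j).2.1 : ℝ) ≤ ((c (anchor j)).2.1 : ℝ) * kap ∧
        ((c j).1 : ℝ) - (τ : ℝ) ≤ (((c (anchor j)).1 : ℝ) - (τ : ℝ)) * lam}.Nonempty := by
  have main : ∀ a ∈ A, ∃ j ∈ {j ∈ (P : Set J) |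
        ((c j).2.1 : ℝ) ≤ ((c (anchor j)).2.1 : ℝ) * kap ∧
        ((c j).1 : ℝ) - (τ : ℝ) ≤ (((c (anchor j)).1 : ℝ) - (τ : ℝ)) * lam},
      (c j).1 = (c a).1 ∧ (c j).2.1 = (c a).2.1 := by
    intro a ha
    have haS := hA.1 ha
    obtain ⟨p, hp, hpa⟩ := hP.2.1 a haS
    have hpS := hP.1 hp
    have hp1 : (c p).1 ≤ (c a).1 := hpa.1
    have hp2 : (c p).2.1 ≤ (c a).2.1 := hpa.2.1
    obtain ⟨b, hb, hb1, hb2⟩ := hA.2.1 p hpS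
    have hba := anchor_antichain hA ha hb (hb1.trans hp1) (hb2.trans hp2)
    subst hba
    have e1 := le_antisymm hp1 hb1
    have e2 := le_antisymm hp2 hb2
    obtain ⟨hx, hx1, hx2⟩ := hanchor p hpS
    have h3 := hx2 b ha hb2
    have hxb : anchor p = b := by
      rcases le_total (c (anchor p)).1 (c b).1 with h | h
      · exact anchor_antichain hA ha hx h (hx1.trans hp2)
      · exact (anchor_antichain hA hx ha h h3).symm
    refine ⟨p, ⟨hp, ?_, ?_⟩, e1, e2⟩
    · rw [hxb, e2]
      exact le_mul_of_one_le_right (Nat.cast_nonneg _) hkap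
    · rw [hxb, e1]
      have : (τ : ℝ) ≤ ((c b).1 : ℝ) := by exact_mod_cast hτ b haS
      exact le_mul_of_one_le_right (sub_nonneg.2 this) hlam
  refine ⟨main, ?_⟩
  obtain ⟨s, hs⟩ := hS
  obtain ⟨j, hj, _⟩ := main _ (hanchor s hs).1
  exact ⟨j, hj⟩
end

section
/- Let V ⊆ ℕ × ℕ × ℕ be a finite set of criteria vectors (arrival time, number of trips, transfer time) and n ∈ ℕ such that every v ∈ V has second component at most n. Let V* := { v ∈ V | for all w ∈ V, (w₁ ≤ v₁ and w₃ ≤ v₃) implies (w₁ = v₁ and w₃ = v₃) } be the subset of vectors minimal with respect to arrival time and transfer time alone. Then for every vector u ∈ ℕ × ℕ × ℕ with second component u₂ ≥ n, the following are equivalent: (1) there exists v ∈ V with v ≤ u componentwise; (2) there exists v ∈ V* with v₁ ≤ u₁ and v₃ ≤ u₃. -/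
/-- Best-bag dominance check of McTB: if every found criteria vector in `V` has at most
`n` trips (second component), then for any vector `u` with at least `n` trips, `u` is
weakly dominated by some vector of `V` iff it is dominated in arrival time (first
component) and transfer time (third component) by some vector of the best bag `V*`,
the subset of `V` of vectors minimal with respect to arrival time and transfer time
alone. -/
theorem bestBag_dominance_check (V : Finset (ℕ × ℕ × ℕ)) (n : ℕ)
    (hV : ∀ v ∈ V, v.2.1 ≤ n) :
    ∀ u : ℕ × ℕ × ℕ, n ≤ u.2.1 →
      ((∃ v ∈ V, v ≤ u) ↔
        ∃ v ∈ {v ∈ (V : Set (ℕ × ℕ × ℕ)) |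
            ∀ w ∈ (V : Set (ℕ × ℕ × ℕ)), w.1 ≤ v.1 ∧ w.2.2 ≤ v.2.2 →
              w.1 = v.1 ∧ w.2.2 = v.2.2},
          v.1 ≤ u.1 ∧ v.2.2 ≤ u.2.2) := by
  intro u hu
  constructor
  · rintro ⟨v, hv, hvu⟩
    obtain ⟨m, hm, hmin⟩ := Finset.exists_min_image
      (V.filter (fun w => w.1 ≤ u.1 ∧ w.2.2 ≤ u.2.2)) (fun w => w.1 + w.2.2)
      ⟨v, Finset.mem_filter.2 ⟨hv, hvu.1, hvu.2.2⟩⟩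
    obtain ⟨hmV, hm1, hm2⟩ := Finset.mem_filter.1 hm
    refine ⟨m, ⟨hmV, ?_⟩, hm1, hm2⟩
    rintro w hw ⟨h1, h2⟩
    have h := hmin w (Finset.mem_filter.2 ⟨hw, h1.trans hm1, h2.trans hm2⟩)
    constructor <;> omega
  · rintro ⟨v, ⟨hv, -⟩, h1, h2⟩
    exact ⟨v, hv, h1, (hV v hv).trans hu, h2⟩
end
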